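/- Every profinite complete lattice is algebraic: in a profinite complete lattice, every element is the join of a set of compact elements. -/

import Mathlib

/-!
Let `m` be the minimum of a class of a cofinite congruence and `m ≤ ⋁ X`. One element of `X` from
each of the finitely many classes meeting `X` gives a finite `X' ⊆ X` with `⋁ X' ≡ ⋁ X`. Hence
`m ⊓ ⋁ X' ≡ m ⊓ ⋁ X = m`, and minimality gives `m ≤ ⋁ X'`: class minima are compact.

Let `s` be the join of all class minima below `x`. For every cofinite congruence, `s` lies between
the minimum of the class of `x` and `x` itself, so `s ≡ x` because classes are order-convex. As
cofinite congruences separate points, `s = x`.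
-/

/-- An element `x` of a poset is widely generated if every `y < x` lies below
some lower cover of `x`. -/
def WidelyGenerated {α : Type*} [PartialOrder α] (x : α) : Prop :=
  ∀ y : α, y < x → ∃ x' : α, x' ⋖ x ∧ y ≤ x'

/-- A canonical join representation of `x`: `⋁U = x`, no proper subset of `U`
has join `x` (irredundancy), and `U ≪ V` for every `V` with `⋁V = x`. -/
def IsCanonicalJoinRep {L : Type*} [CompleteLattice L] (U : Set L) (x : L) : Prop :=
  sSup U = x ∧ (∀ U' : Set L, U' ⊂ U → sSup U' ≠ x) ∧
    ∀ V : Set L, sSup V = x → ∀ u ∈ U, ∃ v ∈ V, u ≤ v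

/-- A complete lattice congruence: an equivalence relation such that whenever
`xᵢ ≡ yᵢ` for all `i`, also `⋁ᵢ xᵢ ≡ ⋁ᵢ yᵢ` and `⋀ᵢ xᵢ ≡ ⋀ᵢ yᵢ`
(families are encoded as sets of pairs). -/
def IsCompleteCongruence {L : Type*} [CompleteLattice L] (r : L → L → Prop) : Prop :=
  Equivalence r ∧
    ∀ P : Set (L × L), (∀ p ∈ P, r p.1 p.2) →
      r (sSup (Prod.fst '' P)) (sSup (Prod.snd '' P)) ∧
      r (sInf (Prod.fst '' P)) (sInf (Prod.snd '' P))

/-- A relation has finitely many equivalence classes. -/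
def HasFinitelyManyClasses {α : Type*} (r : α → α → Prop) : Prop :=
  (Set.range fun x : α => {y : α | r x y}).Finite

/-- A cofinite congruence: a complete lattice congruence with finitely many classes. -/
def IsCofiniteCongruence {L : Type*} [CompleteLattice L] (r : L → L → Prop) : Prop :=
  IsCompleteCongruence r ∧ HasFinitelyManyClasses r

/-- A profinite complete lattice: distinct elements are separated by some
cofinite congruence. -/
def IsProfinite (L : Type*) [CompleteLattice L] : Prop :=
  ∀ x y : L, x ≠ y → ∃ r : L → L → Prop, IsCofiniteCongruence r ∧ ¬ r x y

/-- `x` is compact: whenever `x ≤ ⋁X`, already `x ≤ ⋁X'` for some finite `X' ⊆ X`. -/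
def IsCompactElt {L : Type*} [CompleteLattice L] (x : L) : Prop :=
  ∀ X : Set L, x ≤ sSup X → ∃ X' ⊆ X, X'.Finite ∧ x ≤ sSup X'

/-- `x` is finitely generated: `x` is the minimum of its class for some
cofinite congruence, i.e. `x = π↓(x)`. -/
def FinitelyGeneratedElt {L : Type*} [CompleteLattice L] (x : L) : Prop :=
  ∃ r : L → L → Prop, IsCofiniteCongruence r ∧ ∀ y : L, r x y → x ≤ y

/-- `x` is a complete join-irreducible: no set avoiding `x` has join `x`. -/
def CompleteJoinIrred {L : Type*} [CompleteLattice L] (x : L) : Prop :=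
  ¬ ∃ X : Set L, x ∉ X ∧ sSup X = x

/-- Join semidistributivity: for finite nonempty `X`, if `x ∨ y = z` for all
`x ∈ X` then `(⋀X) ∨ y = z`. -/
def JoinSemidistrib (L : Type*) [CompleteLattice L] : Prop :=
  ∀ X : Set L, X.Finite → X.Nonempty → ∀ y z : L,
    (∀ x ∈ X, x ⊔ y = z) → sInf X ⊔ y = z

/-- Complete join semidistributivity: for any nonempty `X`, if `x ∨ y = z` for all
`x ∈ X` then `(⋀X) ∨ y = z`. -/
def CompletelyJoinSemidistrib (L : Type*) [CompleteLattice L] : Prop :=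
  ∀ X : Set L, X.Nonempty → ∀ y z : L,
    (∀ x ∈ X, x ⊔ y = z) → sInf X ⊔ y = z

/-- Join semidistributivity of the quotient lattice `L/≡`, expressed via
representatives: the join of classes `[x] ∨ [y]` is `[x ⊔ y]` and the (finite)
meet of classes `⋀[xᵢ]` is `[⋀ xᵢ]`. -/
def QuotientJoinSemidistrib {L : Type*} [CompleteLattice L] (r : L → L → Prop) : Prop :=
  ∀ X : Set L, X.Finite → X.Nonempty → ∀ y z : L,
    (∀ x ∈ X, r (x ⊔ y) z) → r (sInf X ⊔ y) z

section Relation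

variable {α β : Type*}

theorem exists_set_rel_image_fst_eq_image_snd_eq {r : α → β → Prop} {X : Set α} {Y : Set β}
    (hXY : ∀ a ∈ X, ∃ b ∈ Y, r a b) (hYX : ∀ b ∈ Y, ∃ a ∈ X, r a b) :
    ∃ P : Set (α × β), (∀ p ∈ P, r p.1 p.2) ∧ Prod.fst '' P = X ∧ Prod.snd '' P = Y := by
  refine ⟨{p | p.1 ∈ X ∧ p.2 ∈ Y ∧ r p.1 p.2}, fun p hp => hp.2.2, ?_, ?_⟩
  · refine Set.Subset.antisymm (Set.image_subset_iff.2 fun p hp => hp.1) fun a ha => ?_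
    obtain ⟨b, hb, hab⟩ := hXY a ha
    exact ⟨(a, b), ⟨ha, hb, hab⟩, rfl⟩
  · refine Set.Subset.antisymm (Set.image_subset_iff.2 fun p hp => hp.2.1) fun b hb => ?_
    obtain ⟨a, ha, hab⟩ := hYX b hb
    exact ⟨(a, b), ⟨ha, hb, hab⟩, rfl⟩

theorem HasFinitelyManyClasses.exists_finite_subset_forall_rel {r : α → α → Prop}
    (hfin : HasFinitelyManyClasses r) (hrefl : ∀ a, r a a) (X : Set α) :
    ∃ X' ⊆ X, X'.Finite ∧ ∀ a ∈ X, ∃ b ∈ X', r a b := by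
  obtain ⟨X', hsub, hbij⟩ := Set.exists_subset_bijOn X fun a => {y | r a y}
  have hX' : X'.Finite :=
    .of_finite_image (hfin.subset (Set.image_subset_range _ _)) hbij.injOn
  refine ⟨X', hsub, hX', fun a ha => ?_⟩
  obtain ⟨b, hb, hba : {y | r b y} = {y | r a y}⟩ := hbij.surjOn (Set.mem_image_of_mem _ ha)
  exact ⟨b, hb, hba.subset (hrefl b)⟩

end Relation

section Congruence

variable {L : Type*} [CompleteLattice L] {r : L → L → Prop}

namespace IsCompleteCongruence

theorem rel_sSup_sSup (h : IsCompleteCongruence r) {X Y : Set L}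
    (hXY : ∀ a ∈ X, ∃ b ∈ Y, r a b) (hYX : ∀ b ∈ Y, ∃ a ∈ X, r a b) : r (sSup X) (sSup Y) := by
  obtain ⟨P, hP, rfl, rfl⟩ := exists_set_rel_image_fst_eq_image_snd_eq hXY hYX
  exact (h.2 P hP).1

theorem rel_sInf_sInf (h : IsCompleteCongruence r) {X Y : Set L}
    (hXY : ∀ a ∈ X, ∃ b ∈ Y, r a b) (hYX : ∀ b ∈ Y, ∃ a ∈ X, r a b) : r (sInf X) (sInf Y) := by
  obtain ⟨P, hP, rfl, rfl⟩ := exists_set_rel_image_fst_eq_image_snd_eq hXY hYX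
  exact (h.2 P hP).2

theorem rel_sup_sup (h : IsCompleteCongruence r) {a b c d : L} (hab : r a b) (hcd : r c d) :
    r (a ⊔ c) (b ⊔ d) := by
  simpa only [sSup_pair] using
    h.rel_sSup_sSup (X := {a, c}) (Y := {b, d}) (by simp [hab, hcd]) (by simp [hab, hcd])

theorem rel_inf_inf (h : IsCompleteCongruence r) {a b c d : L} (hab : r a b) (hcd : r c d) :
    r (a ⊓ c) (b ⊓ d) := by
  simpa only [sInf_pair] using
    h.rel_sInf_sInf (X := {a, c}) (Y := {b, d}) (by simp [hab, hcd]) (by simp [hab, hcd])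

theorem rel_of_le_of_le (h : IsCompleteCongruence r) {a b c : L} (hac : r a c) (hab : a ≤ b)
    (hbc : b ≤ c) : r b c := by
  simpa only [sup_eq_left.2 hab, sup_eq_right.2 hbc] using h.rel_sup_sup (h.1.refl b) hac

end IsCompleteCongruence

/-- The projection `π↓(x)` of `x` to the bottom of its `r`-class, encoded as the meet of the class;
this meet belongs to the class when `r` is a complete congruence. -/
def classMin (r : L → L → Prop) (x : L) : L :=
  sInf {y | r x y}

theorem classMin_le_of_rel {x y : L} (hxy : r x y) : classMin r x ≤ y :=
  sInf_le hxy

theorem IsCompleteCongruence.rel_classMin (h : IsCompleteCongruence r) (x : L) :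
    r x (classMin r x) := by
  simpa only [classMin, sInf_singleton] using
    h.rel_sInf_sInf (X := {x}) (Y := {y | r x y})
      (by rintro _ rfl; exact ⟨_, h.1.refl _, h.1.refl _⟩) (fun _ hxy => ⟨x, rfl, hxy⟩)

namespace IsCofiniteCongruence

theorem finitelyGeneratedElt_classMin (h : IsCofiniteCongruence r) (x : L) :
    FinitelyGeneratedElt (classMin r x) :=
  ⟨r, h, fun _ hy => classMin_le_of_rel (h.1.1.trans (h.1.rel_classMin x) hy)⟩

theorem exists_finite_subset_rel_sSup (h : IsCofiniteCongruence r) (X : Set L) :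
    ∃ X' ⊆ X, X'.Finite ∧ r (sSup X) (sSup X') := by
  obtain ⟨X', hsub, hfin, hrel⟩ := h.2.exists_finite_subset_forall_rel h.1.1.refl X
  exact ⟨X', hsub, hfin, h.1.rel_sSup_sSup hrel fun b hb => ⟨b, hsub hb, h.1.1.refl b⟩⟩

end IsCofiniteCongruence

theorem FinitelyGeneratedElt.isCompactElt {m : L} (hm : FinitelyGeneratedElt m) :
    IsCompactElt m := by
  obtain ⟨r, hr, hmin⟩ := hm
  intro X hmX
  obtain ⟨X', hsub, hfin, hrel⟩ := hr.exists_finite_subset_rel_sSup X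
  have hm_inf : r m (m ⊓ sSup X') := by
    simpa only [inf_eq_left.2 hmX] using hr.1.rel_inf_inf (hr.1.1.refl m) hrel
  exact ⟨X', hsub, hfin, (hmin _ hm_inf).trans inf_le_right⟩

theorem IsProfinite.sSup_finitelyGeneratedElt_le_eq (hL : IsProfinite L) (x : L) :
    sSup {m | FinitelyGeneratedElt m ∧ m ≤ x} = x := by
  by_contra hne
  obtain ⟨r, hr, hnr⟩ := hL _ _ hne
  have hmin_le : classMin r x ≤ x := classMin_le_of_rel (hr.1.1.refl x)
  have hmin_mem : classMin r x ∈ {m | FinitelyGeneratedElt m ∧ m ≤ x} :=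
    ⟨hr.finitelyGeneratedElt_classMin x, hmin_le⟩
  exact hnr <| hr.1.rel_of_le_of_le (hr.1.1.symm (hr.1.rel_classMin x)) (le_sSup hmin_mem)
    (sSup_le fun _ hm => hm.2)

end Congruence

/-- Every profinite complete lattice is algebraic: each element is the
join of a set of compact elements. -/
theorem extended_weak_order_stmt13 {L : Type*} [CompleteLattice L]
    (hL : IsProfinite L) (x : L) :
    ∃ S : Set L, (∀ y ∈ S, IsCompactElt y) ∧ sSup S = x :=
  ⟨{m | FinitelyGeneratedElt m ∧ m ≤ x}, fun _ hm => hm.1.isCompactElt,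
    hL.sSup_finitelyGeneratedElt_le_eq x⟩
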